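/- If p ≡ 3 (mod 4) is prime, then the class number h(-p) of the maximal order Z[(1+√-p)/2] of Q(√-p) is odd. -/

import Mathlib

open NumberField Polynomial nonZeroDivisors

section helpers

variable {K : Type*} [Field K] [NumberField K]

/-- Every element of the field is `u + v α`. -/
lemma aux_repr (p : ℕ) (hp : p.Prime) (α : K) (hα : α ^ 2 = -(p : K))
    (hdeg : Module.finrank ℚ K = 2) (x : K) : ∃ u v : ℚ, x = (u : K) + (v : K) * α := by
  have hirr : ∀ q : ℚ, α ≠ (q : K) := by
    rintro q rfl
    have h : q ^ 2 = -(p : ℚ) := by exact_mod_cast hα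
    have := hp.pos
    have h2 : (0 : ℚ) < p := by exact_mod_cast this
    nlinarith [sq_nonneg q]
  have hli : LinearIndependent ℚ ![(1 : K), α] := by
    rw [LinearIndependent.pair_iff]
    intro s t h
    simp only [Algebra.smul_def, eq_ratCast, mul_one] at h
    have ht : t = 0 := by
      by_contra ht
      have ht' : (t : K) ≠ 0 := by exact_mod_cast ht
      apply hirr (-s / t)
      push_cast
      field_simp
      linear_combination h
    subst ht
    simp at h
    exact ⟨h, rfl⟩
  have hspan := hli.span_eq_top_of_card_eq_finrank' (by simp [hdeg])
  have hx : x ∈ Submodule.span ℚ (Set.range ![(1 : K), α]) := by rw [hspan]; trivial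
  simp only [Matrix.range_cons, Matrix.range_empty, Set.union_empty, Set.singleton_union] at hx
  rw [Submodule.mem_span_pair] at hx
  obtain ⟨u, v, h⟩ := hx
  refine ⟨u, v, ?_⟩
  rw [← h]
  simp [Algebra.smul_def]

lemma aux_quad (hdeg : Module.finrank ℚ K = 2) (a : 𝓞 K) :
    ∃ T : ℤ, a ^ 2 - (T : 𝓞 K) * a + ((Algebra.norm ℤ a : ℤ) : 𝓞 K) = 0 := by
  have h2 : Module.finrank ℤ (𝓞 K) = 2 := by rw [RingOfIntegers.rank, hdeg]
  let b := Module.finBasisOfFinrankEq ℤ (𝓞 K) h2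
  let M := Algebra.leftMulMatrix b a
  refine ⟨M.trace, ?_⟩
  have h := Matrix.aeval_self_charpoly M
  rw [Matrix.charpoly_fin_two] at h
  rw [Algebra.norm_eq_matrix_det b]
  apply Algebra.leftMulMatrix_injective b
  simp only [map_sub, map_add, map_mul, map_pow, map_zero, aeval_X, aeval_C] at h ⊢
  rw [map_intCast, map_intCast]
  simpa using h

lemma aux_norm_nonneg (p : ℕ) (hp : p.Prime) (α : K) (hα : α ^ 2 = -(p : K))
    (hdeg : Module.finrank ℚ K = 2) (a : 𝓞 K) : 0 ≤ Algebra.norm ℤ a := by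
  obtain ⟨T, hT⟩ := aux_quad hdeg a
  obtain ⟨u, v, huv⟩ := aux_repr p hp α hα hdeg (a : K)
  have hirr : ∀ q : ℚ, α ≠ (q : K) := by
    rintro q rfl
    have h : q ^ 2 = -(p : ℚ) := by exact_mod_cast hα
    have := hp.pos
    have h2 : (0 : ℚ) < p := by exact_mod_cast this
    nlinarith [sq_nonneg q]
  have hQ : ((Algebra.norm ℤ a : ℤ) : ℚ) = Algebra.norm ℚ (a : K) := Algebra.coe_norm_int a
  suffices h : (0 : ℚ) ≤ ((Algebra.norm ℤ a : ℤ) : ℚ) by exact_mod_cast h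
  by_cases hv : v = 0
  · rw [hQ, huv, hv]
    have : ((u : K) + ((0 : ℚ) : K) * α) = algebraMap ℚ K u := by simp
    rw [this, Algebra.norm_algebraMap, hdeg]
    positivity
  · have hTK := congrArg (algebraMap (𝓞 K) K) hT
    simp only [map_sub, map_add, map_mul, map_pow, map_zero, map_intCast] at hTK
    rw [show algebraMap (𝓞 K) K a = (u : K) + (v : K) * α from huv] at hTK
    generalize Algebra.norm ℤ a = N at *
    have h1 : ((2 * u * v - T * v : ℚ) : K) * α
        = ((-(u ^ 2 - p * v ^ 2 - T * u + N) : ℚ) : K) := by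
      push_cast
      linear_combination hTK - (v : K) ^ 2 * hα
    have h2 : 2 * u * v - T * v = 0 := by
      by_contra h0
      have h0' : ((2 * u * v - T * v : ℚ) : K) ≠ 0 := by exact_mod_cast h0
      apply hirr (-(u ^ 2 - p * v ^ 2 - T * u + N) / (2 * u * v - T * v))
      rw [Rat.cast_div, eq_div_iff h0', mul_comm]
      exact h1
    rw [h2] at h1
    simp only [Rat.cast_zero, zero_mul] at h1
    have h3 : -(u ^ 2 - p * v ^ 2 - T * u + N) = (0 : ℚ) := by exact_mod_cast h1.symm
    have h4 : (T : ℚ) = 2 * u := by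
      apply mul_right_cancel₀ hv; linarith
    have : (N : ℚ) = u ^ 2 + p * v ^ 2 := by
      rw [h4] at h3; linarith
    rw [this]; positivity

lemma aux_diff (p : ℕ) (hp : p.Prime) (hmod : p % 4 = 3) (α : K) (hα : α ^ 2 = -(p : K))
    (hdeg : Module.finrank ℚ K = 2) (A : 𝓞 K) (hA : (A : K) = α) :
    A ∈ differentIdeal ℤ (𝓞 K) := by
  obtain ⟨c, hc⟩ : ∃ c : ℕ, p + 1 = 4 * c := ⟨(p + 1) / 4, by omega⟩
  have hcK : (p : K) + 1 = 4 * c := by exact_mod_cast hc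
  let f : ℤ[X] := X ^ 2 - X + C (c : ℤ)
  have hfm : f.Monic := by
    show (X ^ 2 - X + C (c : ℤ)).Monic
    monicity!
  have hroot : ((1 + α) / 2) ^ 2 - (1 + α) / 2 + (c : K) = 0 := by
    linear_combination (1 / 4 : K) * hα - (1 / 4 : K) * hcK
  have hint : IsIntegral ℤ ((1 + α) / 2) := ⟨f, hfm, by simpa [f] using hroot⟩
  let w : 𝓞 K := ⟨(1 + α) / 2, hint⟩
  have hw : (w : K) = (1 + α) / 2 := rfl
  have hwf : aeval w f = 0 := by
    apply RingOfIntegers.coe_injective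
    simpa [f, hw] using hroot
  have hadj : Algebra.adjoin ℚ {algebraMap (𝓞 K) K w} = ⊤ := by
    rw [eq_top_iff]
    intro x _
    obtain ⟨u, v, rfl⟩ := aux_repr p hp α hα hdeg x
    have : (u : K) + v * α = algebraMap ℚ K (u - v) + algebraMap ℚ K (2 * v) *
        algebraMap (𝓞 K) K w := by
      rw [show algebraMap (𝓞 K) K w = (1 + α) / 2 from hw]; simp; ring
    rw [this]
    exact add_mem (Subalgebra.algebraMap_mem _ _) (mul_mem (Subalgebra.algebraMap_mem _ _)
      (Algebra.self_mem_adjoin_singleton _ _))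
  have hmem := aeval_derivative_mem_differentIdeal ℤ ℚ K w hadj
  obtain ⟨g, hg⟩ := minpoly.isIntegrallyClosed_dvd (RingOfIntegers.isIntegral w) hwf
  have hA' : A = aeval w (derivative f) := by
    apply RingOfIntegers.coe_injective
    have hd : derivative f = C (2 : ℤ) * X - C 1 := by
      simp only [f, derivative_add, derivative_sub, derivative_X_pow, derivative_X, derivative_C]
      simp
    rw [hd]
    simp only [map_sub, map_mul, aeval_X, aeval_C]
    simp [hw, hA]
    rw [show algebraMap (𝓞 K) K 2 = 2 from map_ofNat _ 2]
    ring
  rw [hA', hg, derivative_mul]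
  simp only [map_add, map_mul, minpoly.aeval, zero_mul, add_zero]
  exact Ideal.mul_mem_right _ _ hmem

lemma aux_sqfree (p : ℕ) (hp : p.Prime) (hmod : p % 4 = 3) (α : K) (hα : α ^ 2 = -(p : K))
    (hdeg : Module.finrank ℚ K = 2) (A : 𝓞 K) (hA : (A : K) = α) (s : ℕ) (hs : Squarefree s)
    (J : Ideal (𝓞 K)) (hJ : J ^ 2 = Ideal.span {(s : 𝓞 K)}) (q : ℕ) (hq : q.Prime)
    (hqs : q ∣ s) : q = p := by
  by_contra hne
  have hqnu : ¬ IsUnit (Ideal.span {(q : 𝓞 K)}) := by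
    intro h
    rw [Ideal.isUnit_iff, Ideal.span_singleton_eq_top] at h
    have := (Nat.isUnit_iff (n := q)).not.mpr hq.one_lt.ne'
    have h2 := (Ideal.absNorm_span_singleton (q : 𝓞 K))
    rw [Ideal.span_singleton_eq_top.mpr h, Ideal.absNorm_top] at h2
    have h3 : Algebra.norm ℤ (q : 𝓞 K) = (q : ℤ) ^ 2 := by
      have := Algebra.norm_algebraMap_of_basis
        (Module.finBasisOfFinrankEq ℤ (𝓞 K) (RingOfIntegers.rank K)) (q : ℤ)
      simpa [hdeg] using this
    rw [h3, Int.natAbs_pow, Int.natAbs_natCast] at h2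
    have := hq.one_lt
    nlinarith
  have hqtop : Ideal.span {(q : 𝓞 K)} ≠ ⊤ := by rwa [Ne, ← Ideal.isUnit_iff]
  obtain ⟨P, hPmax, hP⟩ := Ideal.exists_le_maximal _ hqtop
  have hqP : (q : 𝓞 K) ∈ P := hP (Ideal.mem_span_singleton_self _)
  have hP0 : P ≠ ⊥ := by
    rintro rfl
    have : (q : 𝓞 K) = 0 := by simpa using hqP
    exact hq.ne_zero (by exact_mod_cast this)
  have hPp : Prime P := Ideal.prime_of_isPrime hP0 hPmax.isPrime
  have hcop : ∀ t : ℕ, Nat.Coprime q t → (t : 𝓞 K) ∉ P := by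
    intro t ht htP
    have h := Nat.isCoprime_iff_coprime.mpr ht
    obtain ⟨x, y, hxy⟩ := h
    apply hPmax.ne_top
    rw [Ideal.eq_top_iff_one]
    have h1 : (x : 𝓞 K) * (q : 𝓞 K) + (y : 𝓞 K) * (t : 𝓞 K) = 1 := by exact_mod_cast hxy
    rw [← h1]
    exact add_mem (Ideal.mul_mem_left _ _ hqP) (Ideal.mul_mem_left _ _ htP)
  obtain ⟨t, rfl⟩ := hqs
  have hqt : Nat.Coprime q t := Nat.coprime_of_squarefree_mul hs
  have hst : Ideal.span {((q * t : ℕ) : 𝓞 K)} =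
      Ideal.span {(q : 𝓞 K)} * Ideal.span {(t : 𝓞 K)} := by
    rw [Ideal.span_singleton_mul_span_singleton]; push_cast; rfl
  rw [hst] at hJ
  have hPJ : P ∣ J := by
    apply hPp.dvd_of_dvd_pow (n := 2)
    rw [hJ]
    exact Dvd.dvd.mul_right (Ideal.dvd_iff_le.mpr hP) _
  have hP2 : P ^ 2 ∣ Ideal.span {(q : 𝓞 K)} := by
    apply hPp.pow_dvd_of_dvd_mul_right 2 (b := Ideal.span {(t : 𝓞 K)})
    · intro h
      exact hcop t hqt (Ideal.dvd_iff_le.mp h (Ideal.mem_span_singleton_self _))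
    · rw [← hJ]
      exact pow_dvd_pow_of_dvd hPJ 2
  have hqZ : Prime (q : ℤ) := Nat.prime_iff_prime_int.mp hq
  have hmaxZ : (Ideal.span {(q : ℤ)}).IsMaximal :=
    PrincipalIdealRing.isMaximal_of_irreducible hqZ.irreducible
  have hdiv := pow_sub_one_dvd_differentIdeal ℤ (p := Ideal.span {(q : ℤ)}) P 2
    (by simpa using hq.ne_zero) (by rw [Ideal.map_span]; simpa using hP2)
  have hAP : A ∈ P := by
    have := Ideal.dvd_iff_le.mp hdiv (aux_diff p hp hmod α hα hdeg A hA)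
    simpa using this
  have hpP : (p : 𝓞 K) ∈ P := by
    have h : (p : 𝓞 K) = -A * A := by
      apply RingOfIntegers.coe_injective
      simp [hA]
      linear_combination hα
    rw [h]
    exact Ideal.mul_mem_left _ _ hAP
  exact hcop p ((Nat.coprime_primes hq hp).mpr hne) hpP

lemma aux_sq_inj {I J : Ideal (𝓞 K)} (h : I ^ 2 = J ^ 2) : I = J := by
  apply dvd_antisymm
  · exact (UniqueFactorizationMonoid.pow_dvd_pow_iff_dvd two_ne_zero).mp h.dvd
  · exact (UniqueFactorizationMonoid.pow_dvd_pow_iff_dvd two_ne_zero).mp h.symm.dvd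

lemma aux_nat (p : ℕ) (hp : p.Prime) (hmod : p % 4 = 3) (α : K) (hα : α ^ 2 = -(p : K))
    (hdeg : Module.finrank ℚ K = 2) (m : ℕ) (hm : m ≠ 0)
    (J : Ideal (𝓞 K)) (hJ : J ^ 2 = Ideal.span {(m : 𝓞 K)}) : J.IsPrincipal := by
  have hAint : IsIntegral ℤ α := by
    refine ⟨X ^ 2 + C (p : ℤ), by monicity!, ?_⟩
    simp [hα]
  let A : 𝓞 K := ⟨α, hAint⟩
  have hA : (A : K) = α := rfl
  obtain ⟨s, k, hsk, hs⟩ := Nat.sq_mul_squarefree m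
  have hk : k ≠ 0 := by rintro rfl; simp at hsk; exact hm hsk.symm
  have hfac : Ideal.span {(m : 𝓞 K)} = Ideal.span {(k : 𝓞 K)} ^ 2 * Ideal.span {(s : 𝓞 K)} := by
    rw [Ideal.span_singleton_pow, Ideal.span_singleton_mul_span_singleton, ← hsk]
    push_cast; rfl
  have hkJ : Ideal.span {(k : 𝓞 K)} ∣ J := by
    apply (UniqueFactorizationMonoid.pow_dvd_pow_iff_dvd two_ne_zero).mp
    rw [hJ, hfac]; exact dvd_mul_right _ _
  obtain ⟨J', rfl⟩ := hkJ
  have hk0 : Ideal.span {(k : 𝓞 K)} ≠ 0 := by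
    simpa using hk
  have hJ' : J' ^ 2 = Ideal.span {(s : 𝓞 K)} := by
    rw [hfac, mul_pow] at hJ
    exact mul_left_cancel₀ (pow_ne_zero 2 hk0) hJ
  have key := aux_sqfree p hp hmod α hα hdeg A hA s hs J' hJ'
  have hs0 : s ≠ 0 := hs.ne_zero
  have hs' : s = 1 ∨ s = p := by
    by_cases h1 : s = 1
    · exact Or.inl h1
    · right
      obtain ⟨q, hq, hqs⟩ := Nat.exists_prime_and_dvd h1
      have hqp := key q hq hqs
      subst hqp
      obtain ⟨t, rfl⟩ := hqs
      by_cases ht : t = 1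
      · simp [ht]
      · obtain ⟨r, hr, hrt⟩ := Nat.exists_prime_and_dvd ht
        have hrq := key r hr (hrt.mul_left q)
        subst hrq
        have := Nat.coprime_of_squarefree_mul hs
        exact absurd (Nat.Coprime.eq_one_of_dvd this hrt) hr.one_lt.ne'
  have hex : ∃ y : 𝓞 K, J' = Ideal.span {y} := by
    rcases hs' with rfl | rfl
    · refine ⟨1, aux_sq_inj ?_⟩
      rw [hJ', Ideal.span_singleton_pow]; simp
    · refine ⟨A, aux_sq_inj ?_⟩
      rw [hJ', Ideal.span_singleton_pow]
      have h : A ^ 2 = -(s : 𝓞 K) := by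
        apply RingOfIntegers.coe_injective
        simp [hA, hα]
      rw [h, Ideal.span_singleton_neg]
  obtain ⟨y, rfl⟩ := hex
  rw [Ideal.span_singleton_mul_span_singleton]
  exact ⟨⟨_, rfl⟩⟩

lemma aux_main (p : ℕ) (hp : p.Prime) (hmod : p % 4 = 3) (α : K) (hα : α ^ 2 = -(p : K))
    (hdeg : Module.finrank ℚ K = 2) (I : Ideal (𝓞 K)) (hI0 : I ≠ 0)
    (hI : (I ^ 2).IsPrincipal) : I.IsPrincipal := by
  obtain ⟨a, ha⟩ := hI.principal
  change I ^ 2 = Ideal.span {a} at ha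
  set n := Ideal.absNorm I with hn
  have hn0 : n ≠ 0 := by
    rw [hn, Ne, Ideal.absNorm_eq_zero_iff]; exact hI0
  have hN : Algebra.norm ℤ a = (n : ℤ) ^ 2 := by
    have h := congrArg Ideal.absNorm ha
    rw [map_pow, Ideal.absNorm_span_singleton, ← hn] at h
    have h2 := aux_norm_nonneg p hp α hα hdeg a
    zify at h
    rw [abs_of_nonneg h2] at h
    exact h.symm
  obtain ⟨T, hT⟩ := aux_quad hdeg a
  rw [hN] at hT
  push_cast at hT
  by_cases hb : a + n = 0
  · have han : a = -(n : 𝓞 K) := eq_neg_of_add_eq_zero_left hb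
    apply aux_nat p hp hmod α hα hdeg n hn0
    rw [ha, han, Ideal.span_singleton_neg]
  · have hb2 : (a + n) ^ 2 = ((T + 2 * n : ℤ) : 𝓞 K) * a := by
      push_cast
      linear_combination hT
    set m : ℤ := T + 2 * n with hm
    have hm0 : m ≠ 0 := by
      intro h
      rw [h] at hb2
      simp at hb2
      exact hb hb2
    have hspan : Ideal.span {(m : 𝓞 K)} = Ideal.span {(m.natAbs : 𝓞 K)} := by
      rcases Int.natAbs_eq m with h | h
      · conv_lhs => rw [h]
        simp
      · conv_lhs => rw [h]
        rw [Int.cast_neg, Ideal.span_singleton_neg, Int.cast_natCast]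
    have hbI : Ideal.span {a + (n : 𝓞 K)} ^ 2 = Ideal.span {(m.natAbs : 𝓞 K)} * I ^ 2 := by
      rw [ha, ← hspan, Ideal.span_singleton_pow, hb2, Ideal.span_singleton_mul_span_singleton]
    have hdvd : I ∣ Ideal.span {a + (n : 𝓞 K)} := by
      apply (UniqueFactorizationMonoid.pow_dvd_pow_iff_dvd two_ne_zero).mp
      rw [hbI]; exact dvd_mul_left _ _
    obtain ⟨J, hJ⟩ := hdvd
    have hJ2 : J ^ 2 = Ideal.span {(m.natAbs : 𝓞 K)} := by
      rw [hJ, mul_pow, mul_comm] at hbI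
      exact mul_right_cancel₀ (pow_ne_zero 2 hI0) hbI
    have hJp := aux_nat p hp hmod α hα hdeg m.natAbs (Int.natAbs_ne_zero.mpr hm0) J hJ2
    have hJ0 : J ≠ 0 := by
      rintro rfl
      simp at hJ
      exact hb hJ
    have hmI := mem_nonZeroDivisors_of_ne_zero hI0
    have hmJ := mem_nonZeroDivisors_of_ne_zero hJ0
    rw [← ClassGroup.mk0_eq_one_iff hmJ] at hJp
    rw [← ClassGroup.mk0_eq_one_iff hmI]
    have hIJ : ClassGroup.mk0 (⟨I * J, mul_mem hmI hmJ⟩ : (Ideal (𝓞 K))⁰) = 1 := by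
      rw [ClassGroup.mk0_eq_one_iff, ← hJ]
      exact ⟨⟨_, rfl⟩⟩
    have : (⟨I * J, mul_mem hmI hmJ⟩ : (Ideal (𝓞 K))⁰) = ⟨I, hmI⟩ * ⟨J, hmJ⟩ := rfl
    rw [this, map_mul, hJp, mul_one] at hIJ
    exact hIJ

end helpers

/-- If `p ≡ 3 (mod 4)` is prime, then the class number of `ℚ(√-p)` is odd. -/
theorem stmt_0 (p : ℕ) (hp : p.Prime) (hmod : p % 4 = 3)
    (K : Type*) [Field K] [NumberField K]
    (α : K) (hα : α ^ 2 = -(p : K))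
    (hdeg : Module.finrank ℚ K = 2) :
    Odd (NumberField.classNumber K) := by
  rw [← Nat.not_even_iff_odd, even_iff_two_dvd]
  intro h
  have : Fact (Nat.Prime 2) := ⟨Nat.prime_two⟩
  obtain ⟨c, hc⟩ := exists_prime_orderOf_dvd_card (G := ClassGroup (𝓞 K)) 2 h
  obtain ⟨⟨I, hI⟩, rfl⟩ := ClassGroup.mk0_surjective c
  have h1 : ClassGroup.mk0 (⟨I, hI⟩ : (Ideal (𝓞 K))⁰) = 1 := by
    rw [ClassGroup.mk0_eq_one_iff]
    apply aux_main p hp hmod α hα hdeg I (nonZeroDivisors.ne_zero hI)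
    rw [← ClassGroup.mk0_eq_one_iff (pow_mem hI 2)]
    have := pow_orderOf_eq_one (ClassGroup.mk0 (⟨I, hI⟩ : (Ideal (𝓞 K))⁰))
    rw [hc, ← map_pow] at this
    exact this
  rw [h1, orderOf_one] at hc
  omega
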